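/- arXiv:2506.16561 — 2 statements merged into one kernel-verified Lean document; each statement's English description precedes it below -/
import Mathlib

section
/- For any non-hook-shaped partition λ of n whose Young diagram does not fit into the 3 × 3 square (i.e., λ has either more than 3 rows or more than 3 columns), the three involutions t_3, t_2, and t_2∘t_4 have pairwise different numbers of fixed points on SYT(λ). -/
/-!
A tableau is fixed by `t_k` exactly when `k` and `k + 1` occupy neighbouring boxes (`bk_fix_iff`),
and `t_2 t_4` fixes a tableau only if `t_2` does, because the two involutions move disjoint pairs
of values (`fix_two_of_fix_mul`). The three fixed-point counts turn out to be strictly ordered,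
`#Fix (t_2 t_4) < #Fix t_2 < #Fix t_3`.

* The first inequality is an inclusion of sets, and it is strict because `μ` carries a tableau with
  first row `1 2 3 5 …` and `4` below the `1` (or the transpose of such a tableau): it is fixed by
  `t_2` but not by `t_4`.
* For the second one, send `T ∈ Fix t_2` to `T` if `t_3 T = T` and to `t_2 t_3 T` otherwise. In the
  second case `T` restricts to `1 2 3 / 4` or its transpose, so that `t_2 t_3 T` restricts to
  `1 3 4 / 2` or its transpose and is fixed by `t_3`. The map is injective for formal reasons, and
  it misses every tableau restricting to the `2 × 2` square `1 2 / 3 4`; there are such tableaux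
  because `μ` is not a hook.

Tableaux with a prescribed beginning come from ranking the boxes of `μ` by an injective integer key
that increases along rows and columns (`exists_syt_of_key`).
-/

/-- A standard Young tableau of shape `μ`: a filling of the cells of `μ` by the
numbers `1, …, μ.card` (bijectively), strictly increasing along rows and columns,
with value `0` outside the diagram. -/
structure SYT (μ : YoungDiagram) where
  entry : ℕ → ℕ → ℕ
  zero_outside : ∀ i j, (i, j) ∉ μ → entry i j = 0
  row_strict : ∀ i j1 j2, j1 < j2 → (i, j2) ∈ μ → entry i j1 < entry i j2
  col_strict : ∀ i1 i2 j, i1 < i2 → (i2, j) ∈ μ → entry i1 j < entry i2 j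
  image_eq : μ.cells.image (fun c => entry c.1 c.2) = Finset.Icc 1 μ.card

theorem SYT.ext' {μ : YoungDiagram} {A B : SYT μ} (h : A.entry = B.entry) : A = B := by
  cases A; cases B; simp_all

/-- The involution of values swapping `k` and `k + 1`. -/
def swapVal (k x : ℕ) : ℕ := if x = k then k + 1 else if x = k + 1 then k else x

theorem swapVal_invol (k : ℕ) : Function.Involutive (swapVal k) := by
  intro x; unfold swapVal; split_ifs <;> omega

open Classical in
/-- The Bender–Knuth involution `t_k` as a function: interchange the entries `k` and
`k + 1` if the result is again a standard Young tableau, and do nothing otherwise. -/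
noncomputable def bkFun (μ : YoungDiagram) (k : ℕ) (T : SYT μ) : SYT μ :=
  if h : ∃ T' : SYT μ, T'.entry = fun i j => swapVal k (T.entry i j) then h.choose else T

theorem bkFun_pos {μ : YoungDiagram} {k : ℕ} {T : SYT μ}
    (h : ∃ T' : SYT μ, T'.entry = fun i j => swapVal k (T.entry i j)) :
    (bkFun μ k T).entry = fun i j => swapVal k (T.entry i j) := by
  unfold bkFun; rw [dif_pos h]; exact h.choose_spec

theorem bkFun_neg {μ : YoungDiagram} {k : ℕ} {T : SYT μ}
    (h : ¬ ∃ T' : SYT μ, T'.entry = fun i j => swapVal k (T.entry i j)) :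
    bkFun μ k T = T := by
  unfold bkFun; rw [dif_neg h]

theorem bkFun_invol (μ : YoungDiagram) (k : ℕ) : Function.Involutive (bkFun μ k) := by
  intro T
  by_cases h : ∃ T' : SYT μ, T'.entry = fun i j => swapVal k (T.entry i j)
  · have e1 : (bkFun μ k T).entry = fun i j => swapVal k (T.entry i j) := bkFun_pos h
    have h2 : ∃ T'' : SYT μ, T''.entry = fun i j => swapVal k ((bkFun μ k T).entry i j) := by
      refine ⟨T, ?_⟩
      funext i j
      simp only [e1]
      exact (swapVal_invol k (T.entry i j)).symm
    apply SYT.ext'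
    rw [bkFun_pos h2]
    funext i j
    simp only [e1]
    exact swapVal_invol k (T.entry i j)
  · rw [bkFun_neg h, bkFun_neg h]

/-- The Bender–Knuth involution `t_k` as a permutation of `SYT μ`. -/
noncomputable def BK (μ : YoungDiagram) (k : ℕ) : Equiv.Perm (SYT μ) :=
  (bkFun_invol μ k).toPerm

/-- The image of the cactus group `C_n` in the permutation group of `SYT μ`:
the subgroup generated by the Bender–Knuth involutions `t_1, …, t_{n-1}`. -/
noncomputable def BKgroup (μ : YoungDiagram) : Subgroup (Equiv.Perm (SYT μ)) :=
  Subgroup.closure (BK μ '' Set.Icc 1 (μ.card - 1))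

/-- The simultaneous Bender–Knuth involution `t_k` on pairs of tableaux. -/
noncomputable def BKpair (μ1 μ2 : YoungDiagram) (k : ℕ) : Equiv.Perm (SYT μ1 × SYT μ2) :=
  Equiv.prodCongr (BK μ1 k) (BK μ2 k)

/-- The image of the cactus group acting diagonally on pairs of tableaux. -/
noncomputable def BKpairGroup (μ1 μ2 : YoungDiagram) : Subgroup (Equiv.Perm (SYT μ1 × SYT μ2)) :=
  Subgroup.closure (BKpair μ1 μ2 '' Set.Icc 1 (μ1.card - 1))

/-- The simultaneous Bender–Knuth involution `t_k` on triples of tableaux. -/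
noncomputable def BKtriple (μ1 μ2 μ3 : YoungDiagram) (k : ℕ) :
    Equiv.Perm (SYT μ1 × SYT μ2 × SYT μ3) :=
  Equiv.prodCongr (BK μ1 k) (Equiv.prodCongr (BK μ2 k) (BK μ3 k))

/-- The image of the cactus group acting diagonally on triples of tableaux. -/
noncomputable def BKtripleGroup (μ1 μ2 μ3 : YoungDiagram) :
    Subgroup (Equiv.Perm (SYT μ1 × SYT μ2 × SYT μ3)) :=
  Subgroup.closure (BKtriple μ1 μ2 μ3 '' Set.Icc 1 (μ1.card - 1))

/-- A partition is hook-shaped if its diagram has no box in position `(2,2)`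
(in 1-indexed terms), i.e. no cell `(1,1)` in 0-indexed terms. -/
def HookShaped (μ : YoungDiagram) : Prop := (1, 1) ∉ μ

/-- A partition is almost hook-shaped if it is a hook plus the single box `(2,2)`. -/
def AlmostHookShaped (μ : YoungDiagram) : Prop :=
  (1, 1) ∈ μ ∧ (1, 2) ∉ μ ∧ (2, 1) ∉ μ

/-- The value `k` occurs in the first row of `A`. -/
def SYT.inFirstRow {μ : YoungDiagram} (A : SYT μ) (k : ℕ) : Prop :=
  ∃ j, (0, j) ∈ μ ∧ A.entry 0 j = k

open scoped Classical in
/-- The set `S_{A,B}` of values lying in the first row of both `A` and `B`. -/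
noncomputable def sharedFirstRow {μ1 μ2 : YoungDiagram} (A : SYT μ1) (B : SYT μ2) : Finset ℕ :=
  (Finset.Icc 1 μ1.card).filter (fun k => A.inFirstRow k ∧ B.inFirstRow k)

/-- Tableaux (possibly of different shapes) are equal, as fillings of the plane. -/
def EqTab {μ1 μ2 : YoungDiagram} (A : SYT μ1) (B : SYT μ2) : Prop := A.entry = B.entry

/-- `B` is the transpose of `A`. -/
def EqTransposeTab {μ1 μ2 : YoungDiagram} (A : SYT μ1) (B : SYT μ2) : Prop :=
  ∀ i j, B.entry i j = A.entry j i

/-- A pair of partitions of the same `n` is viable if at most one of them is hook-shaped. -/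
def ViablePairShape (μ1 μ2 : YoungDiagram) : Prop := ¬ (HookShaped μ1 ∧ HookShaped μ2)

/-- A pair of tableaux is viable if the pair of shapes is viable, the tableaux are
different and not transposes of each other. -/
def ViableTabPair {μ1 μ2 : YoungDiagram} (A : SYT μ1) (B : SYT μ2) : Prop :=
  ViablePairShape μ1 μ2 ∧ ¬ EqTab A B ∧ ¬ EqTransposeTab A B

/-- A pair of partitions is base case if it is viable and either both are almost
hook-shaped or one is almost hook-shaped and the other is hook-shaped. -/
def BaseCasePair (μ1 μ2 : YoungDiagram) : Prop :=
  ViablePairShape μ1 μ2 ∧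
    ((AlmostHookShaped μ1 ∧ AlmostHookShaped μ2) ∨
      (AlmostHookShaped μ1 ∧ HookShaped μ2) ∨ (HookShaped μ1 ∧ AlmostHookShaped μ2))

/-- A triple of partitions is viable if at most one of them is hook-shaped. -/
def ViableTripleShape (μ1 μ2 μ3 : YoungDiagram) : Prop :=
  ¬ (HookShaped μ1 ∧ HookShaped μ2) ∧ ¬ (HookShaped μ1 ∧ HookShaped μ3) ∧
    ¬ (HookShaped μ2 ∧ HookShaped μ3)

/-- A triple of tableaux is viable if the shapes are viable, no two of the tableaux
are equal and no two are transposes of each other. -/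
def ViableTabTriple {μ1 μ2 μ3 : YoungDiagram} (A : SYT μ1) (B : SYT μ2) (C : SYT μ3) : Prop :=
  ViableTripleShape μ1 μ2 μ3 ∧
    (¬ EqTab A B ∧ ¬ EqTab A C ∧ ¬ EqTab B C) ∧
    (¬ EqTransposeTab A B ∧ ¬ EqTransposeTab A C ∧ ¬ EqTransposeTab B C)

/-- A triple of partitions is base case if it is viable and either two of them are
almost hook-shaped, or one is almost hook-shaped and another one is hook-shaped. -/
def BaseCaseTriple (μ1 μ2 μ3 : YoungDiagram) : Prop :=
  ViableTripleShape μ1 μ2 μ3 ∧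
    ((AlmostHookShaped μ1 ∧ AlmostHookShaped μ2) ∨ (AlmostHookShaped μ1 ∧ AlmostHookShaped μ3) ∨
      (AlmostHookShaped μ2 ∧ AlmostHookShaped μ3) ∨
      (AlmostHookShaped μ1 ∧ (HookShaped μ2 ∨ HookShaped μ3)) ∨
      (AlmostHookShaped μ2 ∧ (HookShaped μ1 ∨ HookShaped μ3)) ∨
      (AlmostHookShaped μ3 ∧ (HookShaped μ1 ∨ HookShaped μ2)))

/-- `A'` is the tableau obtained from `A` by deleting the box containing the largest
entry `n = μ.card`: its shape is contained in that of `A`, has one box fewer, and its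
entries agree with those of `A`. -/
def IsRestriction {μ ν : YoungDiagram} (A : SYT μ) (A' : SYT ν) : Prop :=
  ν.cells ⊆ μ.cells ∧ ν.card + 1 = μ.card ∧ ∀ c ∈ ν.cells, A'.entry c.1 c.2 = A.entry c.1 c.2

/-- A box `c` of `μ` is a corner if some standard Young tableau of shape `μ` has the
largest entry `n = μ.card` in that box. -/
def IsCornerBox (μ : YoungDiagram) (c : ℕ × ℕ) : Prop :=
  c ∈ μ ∧ ∃ A : SYT μ, A.entry c.1 c.2 = μ.card

/-- `μ` has at least two corners. -/
def HasTwoCorners (μ : YoungDiagram) : Prop :=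
  ∃ c c' : ℕ × ℕ, c ≠ c' ∧ IsCornerBox μ c ∧ IsCornerBox μ c'

/-- The number of fixed points of a permutation of `SYT μ`. -/
noncomputable def fixedCount {μ : YoungDiagram} (g : Equiv.Perm (SYT μ)) : ℕ :=
  Nat.card {A : SYT μ // g A = A}

/-! ### Entries of a standard tableau -/

theorem SYT.mem_of_ne_zero {μ : YoungDiagram} (T : SYT μ) {i j : ℕ} (h : T.entry i j ≠ 0) :
    (i, j) ∈ μ := by
  by_contra hc
  exact h (T.zero_outside i j hc)

theorem SYT.entry_bounds {μ : YoungDiagram} (T : SYT μ) {i j : ℕ} (h : (i, j) ∈ μ) :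
    1 ≤ T.entry i j ∧ T.entry i j ≤ μ.card := by
  have : T.entry i j ∈ μ.cells.image (fun c => T.entry c.1 c.2) :=
    Finset.mem_image.2 ⟨(i, j), h, rfl⟩
  rw [T.image_eq] at this
  exact Finset.mem_Icc.1 this

theorem SYT.exists_entry {μ : YoungDiagram} (T : SYT μ) {k : ℕ} (h1 : 1 ≤ k) (h2 : k ≤ μ.card) :
    ∃ i j, T.entry i j = k := by
  have : k ∈ Finset.Icc 1 μ.card := Finset.mem_Icc.2 ⟨h1, h2⟩
  rw [← T.image_eq] at this
  obtain ⟨c, -, hc⟩ := Finset.mem_image.1 this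
  exact ⟨_, _, hc⟩

/-- Outside the diagram all entries are `0`, so positions are determined by nonzero entries only. -/
theorem SYT.entry_inj {μ : YoungDiagram} (T : SYT μ) {i j i' j' : ℕ} (h0 : T.entry i j ≠ 0)
    (h : T.entry i j = T.entry i' j') : i = i' ∧ j = j' := by
  have hinj : Set.InjOn (fun c : ℕ × ℕ => T.entry c.1 c.2) μ.cells := by
    rw [← Finset.card_image_iff, T.image_eq]
    simp
  have := hinj (T.mem_of_ne_zero h0) (T.mem_of_ne_zero (h ▸ h0)) h
  simpa using this

theorem SYT.row_lt {μ : YoungDiagram} (T : SYT μ) {i j1 j2 : ℕ} (h : j1 < j2)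
    (h0 : T.entry i j2 ≠ 0) : 1 ≤ T.entry i j1 ∧ T.entry i j1 < T.entry i j2 :=
  ⟨(T.entry_bounds (μ.up_left_mem le_rfl h.le (T.mem_of_ne_zero h0))).1,
    T.row_strict _ _ _ h (T.mem_of_ne_zero h0)⟩

theorem SYT.col_lt {μ : YoungDiagram} (T : SYT μ) {i1 i2 j : ℕ} (h : i1 < i2)
    (h0 : T.entry i2 j ≠ 0) : 1 ≤ T.entry i1 j ∧ T.entry i1 j < T.entry i2 j :=
  ⟨(T.entry_bounds (μ.up_left_mem h.le le_rfl (T.mem_of_ne_zero h0))).1,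
    T.col_strict _ _ _ h (T.mem_of_ne_zero h0)⟩

instance SYT.finite (μ : YoungDiagram) : Finite (SYT μ) := by
  let f : SYT μ → (μ.cells → Fin (μ.card + 1)) := fun T c =>
    ⟨T.entry c.1.1 c.1.2, Nat.lt_succ_of_le (T.entry_bounds c.2).2⟩
  refine Finite.of_injective f fun A B h => SYT.ext' ?_
  funext i j
  by_cases hc : (i, j) ∈ μ
  · have := congrFun h ⟨(i, j), hc⟩
    simpa [f] using this
  · rw [A.zero_outside i j hc, B.zero_outside i j hc]

/-! ### Fixed points of Bender–Knuth involutions -/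

/-- The value `k + 1` sits immediately to the right of or immediately below the value `k`. -/
def SYT.Adj {μ : YoungDiagram} (T : SYT μ) (k : ℕ) : Prop :=
  ∃ i j, T.entry i j = k ∧ (T.entry i (j + 1) = k + 1 ∨ T.entry (i + 1) j = k + 1)

theorem bk_invol {μ : YoungDiagram} (k : ℕ) (T : SYT μ) : BK μ k (BK μ k T) = T :=
  bkFun_invol μ k T

theorem bk_entry {μ : YoungDiagram} {k : ℕ} {T : SYT μ} (h : BK μ k T ≠ T) :
    (BK μ k T).entry = fun i j => swapVal k (T.entry i j) := by
  by_cases hc : ∃ T' : SYT μ, T'.entry = fun i j => swapVal k (T.entry i j)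
  · exact bkFun_pos hc
  · exact absurd (bkFun_neg hc) h

theorem bk_fix_of_adj {μ : YoungDiagram} {k : ℕ} {T : SYT μ} (hk : 1 ≤ k) (h : T.Adj k) :
    BK μ k T = T := by
  by_contra hne
  have he := bk_entry hne
  obtain ⟨i, j, h1, h2 | h2⟩ := h
  · have := (BK μ k T).row_strict i j (j + 1) (by omega) (T.mem_of_ne_zero (by omega))
    simp [he, h1, h2, swapVal] at this
  · have := (BK μ k T).col_strict i (i + 1) j (by omega) (T.mem_of_ne_zero (by omega))
    simp [he, h1, h2, swapVal] at this

theorem swapVal_lt {k a b : ℕ} (h : a < b) (h' : ¬ (a = k ∧ b = k + 1)) :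
    swapVal k a < swapVal k b := by
  unfold swapVal
  split_ifs <;> omega

/-- If `k` and `k + 1` are not neighbours, interchanging them keeps rows and columns increasing:
two such values in a common row or column would have to be neighbours. -/
theorem exists_syt_swapVal {μ : YoungDiagram} {k : ℕ} {T : SYT μ} (hk : 1 ≤ k)
    (hk' : k + 1 ≤ μ.card) (h : ¬ T.Adj k) : ∃ T' : SYT μ, T'.entry = fun i j => swapVal k (T.entry i j) := by
  refine ⟨⟨fun i j => swapVal k (T.entry i j), ?_, ?_, ?_, ?_⟩, rfl⟩
  · intro i j hc
    have h0 : swapVal k 0 = 0 := by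
      rw [swapVal, if_neg (by omega), if_neg (by omega)]
    simpa only [T.zero_outside i j hc] using h0
  · intro i j1 j2 hj hm
    refine swapVal_lt (T.row_strict i j1 j2 hj hm) ?_
    rintro ⟨ha, hb⟩
    rcases (show j1 + 1 = j2 ∨ j1 + 1 < j2 by omega) with e | e
    · exact h ⟨i, j1, ha, Or.inl (e ▸ hb)⟩
    · have h1 := T.row_lt (i := i) e (by omega)
      have h2 := T.row_lt (i := i) (show j1 < j1 + 1 by omega) (by omega)
      omega
  · intro i1 i2 j hi hm
    refine swapVal_lt (T.col_strict i1 i2 j hi hm) ?_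
    rintro ⟨ha, hb⟩
    rcases (show i1 + 1 = i2 ∨ i1 + 1 < i2 by omega) with e | e
    · exact h ⟨i1, j, ha, Or.inr (e ▸ hb)⟩
    · have h1 := T.col_lt (j := j) e (by omega)
      have h2 := T.col_lt (j := j) (show i1 < i1 + 1 by omega) (by omega)
      omega
  · have hcomp : μ.cells.image (fun c => swapVal k (T.entry c.1 c.2))
        = (μ.cells.image (fun c => T.entry c.1 c.2)).image (swapVal k) := by
      rw [Finset.image_image]; rfl
    have hb : ∀ x ∈ Finset.Icc 1 μ.card, swapVal k x ∈ Finset.Icc 1 μ.card := by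
      intro x hx
      rw [Finset.mem_Icc] at hx ⊢
      unfold swapVal
      split_ifs <;> omega
    rw [hcomp, T.image_eq]
    ext x
    rw [Finset.mem_image]
    constructor
    · rintro ⟨y, hy, rfl⟩
      exact hb y hy
    · exact fun hx => ⟨swapVal k x, hb x hx, swapVal_invol k x⟩

theorem bk_fix_iff {μ : YoungDiagram} {k : ℕ} {T : SYT μ} (hk : 1 ≤ k) (hk' : k + 1 ≤ μ.card) :
    BK μ k T = T ↔ T.Adj k := by
  refine ⟨fun h => ?_, bk_fix_of_adj hk⟩
  by_contra hc
  have he : (BK μ k T).entry = _ := bkFun_pos (exists_syt_swapVal hk hk' hc)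
  obtain ⟨i, j, hij⟩ := T.exists_entry hk (by omega)
  have := congrFun (congrFun he i) j
  rw [h] at this
  simp [hij, swapVal] at this

theorem fix_two_of_fix_mul {μ : YoungDiagram} {T : SYT μ} (h : (BK μ 2 * BK μ 4) T = T) :
    BK μ 2 T = T := by
  by_contra hne
  have h24 : BK μ 4 T = BK μ 2 T := by
    rw [Equiv.Perm.mul_apply] at h
    rw [← bk_invol 2 (BK μ 4 T), h]
  have h4 : BK μ 4 T ≠ T := by rwa [h24]
  have e2 := bk_entry hne
  rw [← h24, bk_entry h4] at e2
  apply hne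
  apply SYT.ext'
  rw [bk_entry hne]
  funext i j
  have := congrFun (congrFun e2 i) j
  simp only [swapVal] at this ⊢
  split_ifs at this ⊢ <;> omega

/-! ### Positions of the values up to four -/

theorem SYT.entry_zero_zero {μ : YoungDiagram} (T : SYT μ) (h : 1 ≤ μ.card) :
    T.entry 0 0 = 1 := by
  obtain ⟨i, j, hij⟩ := T.exists_entry le_rfl h
  rcases Nat.eq_zero_or_pos i with rfl | hi
  · rcases Nat.eq_zero_or_pos j with rfl | hj
    · exact hij
    · have := T.row_lt (i := 0) hj (by omega)
      omega
  · have := T.col_lt (j := j) hi (by omega)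
    omega

theorem SYT.pos_two {μ : YoungDiagram} (T : SYT μ) {i j : ℕ} (h : T.entry i j = 2) :
    (i = 0 ∧ j = 1) ∨ (i = 1 ∧ j = 0) := by
  have hc := T.entry_bounds (T.mem_of_ne_zero (i := i) (j := j) (by omega))
  have h00 := T.entry_zero_zero (by omega)
  rcases Nat.eq_zero_or_pos i with rfl | hi
  · left
    rcases (show j = 0 ∨ j = 1 ∨ 1 < j by omega) with rfl | rfl | hj
    · omega
    · simp
    · have h1 := T.row_lt (i := 0) hj (by omega)
      have h2 := T.row_lt (i := 0) (show 0 < 1 by omega) (by omega)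
      omega
  · rcases Nat.eq_zero_or_pos j with rfl | hj
    · right
      rcases (show i = 1 ∨ 1 < i by omega) with rfl | hi
      · simp
      · have h1 := T.col_lt (j := 0) hi (by omega)
        have h2 := T.col_lt (j := 0) (show 0 < 1 by omega) (by omega)
        omega
    · have h1 := T.row_lt (i := i) hj (by omega)
      have h2 := T.col_lt (j := 0) hi (by omega)
      omega

theorem SYT.pos_of_fix_two {μ : YoungDiagram} {T : SYT μ} (hc : 3 ≤ μ.card)
    (h : BK μ 2 T = T) :
    (T.entry 0 1 = 2 ∧ T.entry 0 2 = 3) ∨ (T.entry 1 0 = 2 ∧ T.entry 2 0 = 3) := by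
  have h00 := T.entry_zero_zero (by omega)
  obtain ⟨i, j, h2, h3⟩ := (bk_fix_iff (by omega) (by omega)).1 h
  rcases T.pos_two h2 with ⟨rfl, rfl⟩ | ⟨rfl, rfl⟩
  · rcases h3 with h3 | h3
    · exact Or.inl ⟨h2, h3⟩
    · -- a `3` at `(1, 1)` would force a second `2` at `(1, 0)`
      have a := T.row_lt (i := 1) (show 0 < 1 by omega) (by simp_all)
      have b := T.col_lt (j := 0) (show 0 < 1 by omega) (by omega)
      have := T.entry_inj (i := 0) (j := 1) (i' := 1) (j' := 0) (by omega) (by simp_all; omega)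
      omega
  · rcases h3 with h3 | h3
    · have a := T.col_lt (j := 1) (show 0 < 1 by omega) (by simp_all)
      have b := T.row_lt (i := 0) (show 0 < 1 by omega) (by omega)
      have := T.entry_inj (i := 1) (j := 0) (i' := 0) (j' := 1) (by omega) (by simp_all; omega)
      omega
    · exact Or.inr ⟨h2, h3⟩

theorem SYT.pos_of_fix_two_of_not_fix_three {μ : YoungDiagram} {T : SYT μ} (hc : 4 ≤ μ.card)
    (h : BK μ 2 T = T) (h' : BK μ 3 T ≠ T) :
    (T.entry 0 1 = 2 ∧ T.entry 0 2 = 3 ∧ T.entry 1 0 = 4) ∨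
      (T.entry 1 0 = 2 ∧ T.entry 2 0 = 3 ∧ T.entry 0 1 = 4) := by
  have h00 := T.entry_zero_zero (by omega)
  obtain ⟨i, j, h4⟩ := T.exists_entry (k := 4) (by omega) hc
  rw [Ne, bk_fix_iff (by omega) (by omega)] at h'
  rcases T.pos_of_fix_two (by omega) h with ⟨h2, h3⟩ | ⟨h2, h3⟩
  · left
    refine ⟨h2, h3, ?_⟩
    rcases Nat.eq_zero_or_pos i with rfl | hi
    · exfalso
      rcases (show j = 0 ∨ j = 1 ∨ j = 2 ∨ j = 3 ∨ 3 < j by omega) with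
        rfl | rfl | rfl | rfl | hj
      · omega
      · omega
      · omega
      · exact h' ⟨0, 2, h3, Or.inl h4⟩
      · have a := T.row_lt (i := 0) hj (by omega)
        have b := T.row_lt (i := 0) (show 2 < 3 by omega) (by omega)
        omega
    · -- the first column avoids `2` and `3`, so every entry below the `1` is at least `4`
      have key : T.entry 1 0 ≠ 0 → 4 ≤ T.entry 1 0 := by
        intro h0
        by_contra hlt
        have a := T.col_lt (j := 0) (show 0 < 1 by omega) h0
        rcases (show T.entry 1 0 = 2 ∨ T.entry 1 0 = 3 by omega) with e | e
        · have := T.entry_inj h0 (e.trans h2.symm)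
          omega
        · have := T.entry_inj h0 (e.trans h3.symm)
          omega
      rcases (show i = 1 ∨ 1 < i by omega) with rfl | hi1
      · rcases Nat.eq_zero_or_pos j with rfl | hj
        · exact h4
        · have a := T.row_lt (i := 1) hj (by omega)
          have := key (by omega)
          omega
      · have a := T.col_lt (j := j) hi1 (by omega)
        rcases Nat.eq_zero_or_pos j with rfl | hj
        · have := key (by omega)
          omega
        · have b := T.row_lt (i := 1) hj (by omega)
          have := key (by omega)
          omega
  · right
    refine ⟨h2, h3, ?_⟩
    rcases Nat.eq_zero_or_pos j with rfl | hj
    · exfalso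
      rcases (show i = 0 ∨ i = 1 ∨ i = 2 ∨ i = 3 ∨ 3 < i by omega) with
        rfl | rfl | rfl | rfl | hi
      · omega
      · omega
      · omega
      · exact h' ⟨2, 0, h3, Or.inr h4⟩
      · have a := T.col_lt (j := 0) hi (by omega)
        have b := T.col_lt (j := 0) (show 2 < 3 by omega) (by omega)
        omega
    · have key : T.entry 0 1 ≠ 0 → 4 ≤ T.entry 0 1 := by
        intro h0
        by_contra hlt
        have a := T.row_lt (i := 0) (show 0 < 1 by omega) h0
        rcases (show T.entry 0 1 = 2 ∨ T.entry 0 1 = 3 by omega) with e | e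
        · have := T.entry_inj h0 (e.trans h2.symm)
          omega
        · have := T.entry_inj h0 (e.trans h3.symm)
          omega
      rcases (show j = 1 ∨ 1 < j by omega) with rfl | hj1
      · rcases Nat.eq_zero_or_pos i with rfl | hi
        · exact h4
        · have a := T.col_lt (j := 1) hi (by omega)
          have := key (by omega)
          omega
      · have a := T.row_lt (i := i) hj1 (by omega)
        rcases Nat.eq_zero_or_pos i with rfl | hi
        · have := key (by omega)
          omega
        · have b := T.col_lt (j := 1) hi (by omega)
          have := key (by omega)
          omega

/-- The step that makes the comparison map `Fix t_2 → Fix t_3` well defined. -/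
theorem fix_three_of_fix_two {μ : YoungDiagram} {T : SYT μ} (hc : 4 ≤ μ.card)
    (h : BK μ 2 T = T) (h' : BK μ 3 T ≠ T) : BK μ 3 (BK μ 2 (BK μ 3 T)) = BK μ 2 (BK μ 3 T) := by
  have e3 := bk_entry h'
  have hpos := SYT.pos_of_fix_two_of_not_fix_three hc h h'
  have hne : BK μ 2 (BK μ 3 T) ≠ BK μ 3 T := by
    intro hf
    have := SYT.pos_of_fix_two (by omega) hf
    rw [e3] at this
    rcases hpos with ⟨a, b, c⟩ | ⟨a, b, c⟩ <;> simp [swapVal, a, b, c] at this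
  have e2 := bk_entry hne
  apply bk_fix_of_adj (by omega)
  rcases hpos with ⟨a, b, c⟩ | ⟨a, b, c⟩
  · exact ⟨0, 1, by simp [e2, e3, swapVal, a], Or.inl (by simp [e2, e3, swapVal, b])⟩
  · exact ⟨1, 0, by simp [e2, e3, swapVal, a], Or.inr (by simp [e2, e3, swapVal, b])⟩

/-! ### Tableaux with a prescribed beginning -/

/-- Ranking the boxes of `μ` by an injective key that increases along rows and columns yields a
standard tableau. -/
theorem exists_syt_of_key (μ : YoungDiagram) (key : ℕ × ℕ → ℕ) (hinj : Function.Injective key)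
    (hrow : ∀ i j1 j2, j1 < j2 → key (i, j1) < key (i, j2))
    (hcol : ∀ i1 i2 j, i1 < i2 → key (i1, j) < key (i2, j)) :
    ∃ T : SYT μ, ∀ c ∈ μ,
      T.entry c.1 c.2 = (μ.cells.filter (fun c' => key c' ≤ key c)).card := by
  classical
  let r : ℕ × ℕ → ℕ := fun c => (μ.cells.filter (fun c' => key c' ≤ key c)).card
  have hr : ∀ c c', c' ∈ μ → key c < key c' → r c < r c' := by
    intro c c' hc' hlt
    refine Finset.card_lt_card (Finset.ssubset_iff_of_subset ?_ |>.2 ⟨c', ?_, ?_⟩)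
    · intro x hx
      rw [Finset.mem_filter] at hx ⊢
      exact ⟨hx.1, hx.2.trans hlt.le⟩
    · exact Finset.mem_filter.2 ⟨hc', le_rfl⟩
    · intro hx
      exact absurd (Finset.mem_filter.1 hx).2 (not_le.2 hlt)
  have hr0 : ∀ c ∈ μ, 1 ≤ r c := fun c hc =>
    Finset.card_pos.2 ⟨c, Finset.mem_filter.2 ⟨hc, le_rfl⟩⟩
  have hrinj : Set.InjOn r μ.cells := by
    intro c hc c' hc' he
    apply hinj
    rcases lt_trichotomy (key c) (key c') with hlt | heq | hlt
    · exact absurd he (hr _ _ hc' hlt).ne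
    · exact heq
    · exact absurd he (hr _ _ hc hlt).ne'
  refine ⟨⟨fun i j => if (i, j) ∈ μ then r (i, j) else 0, ?_, ?_, ?_, ?_⟩, ?_⟩
  · intro i j h
    simp [h]
  · intro i j1 j2 hj hm
    have hm1 : (i, j1) ∈ μ := μ.up_left_mem le_rfl hj.le hm
    simp only [hm, hm1, if_true]
    exact hr _ _ hm (hrow i j1 j2 hj)
  · intro i1 i2 j hi hm
    have hm1 : (i1, j) ∈ μ := μ.up_left_mem hi.le le_rfl hm
    simp only [hm, hm1, if_true]
    exact hr _ _ hm (hcol i1 i2 j hi)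
  · have h1 : μ.cells.image (fun c => if (c.1, c.2) ∈ μ then r (c.1, c.2) else 0)
        = μ.cells.image r := by
      refine Finset.image_congr fun c hc => ?_
      have hc' : c ∈ μ := hc
      simp [hc']
    rw [h1]
    refine Finset.eq_of_subset_of_card_le ?_ ?_
    · intro x hx
      obtain ⟨c, hc, rfl⟩ := Finset.mem_image.1 hx
      exact Finset.mem_Icc.2 ⟨hr0 c hc, Finset.card_filter_le _ _⟩
    · rw [Finset.card_image_of_injOn hrinj]
      simp
  · intro c hc
    have hc' : (c.1, c.2) ∈ μ := hc
    simp only [hc', if_true]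
    rfl

/-- A key that lists the square `1 2 / 3 4` first. Beyond it, any pairing function that is strictly
monotone in both arguments does. -/
def squareKey (c : ℕ × ℕ) : ℕ :=
  if c = (0, 0) then 0 else if c = (0, 1) then 1 else if c = (1, 0) then 2
  else if c = (1, 1) then 3 else 4 + Nat.pair c.1 c.2

/-- A key that lists the boxes of `1 2 3 5 / 4` first, in this order. -/
def armKey (c : ℕ × ℕ) : ℕ :=
  if c = (0, 0) then 0 else if c = (0, 1) then 1 else if c = (0, 2) then 2
  else if c = (1, 0) then 3 else if c = (0, 3) then 4 else 5 + Nat.pair c.1 c.2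

theorem squareKey_injective : Function.Injective squareKey := by
  rintro ⟨a, b⟩ ⟨c, d⟩ h
  by_cases e : Nat.pair a b = Nat.pair c d
  · rw [Nat.pair_eq_pair] at e
    exact Prod.ext e.1 e.2
  · simp only [squareKey, Prod.mk.injEq] at h ⊢
    split_ifs at h <;> omega

set_option maxHeartbeats 1000000 in
theorem armKey_injective : Function.Injective armKey := by
  rintro ⟨a, b⟩ ⟨c, d⟩ h
  by_cases e : Nat.pair a b = Nat.pair c d
  · rw [Nat.pair_eq_pair] at e
    exact Prod.ext e.1 e.2
  · simp only [armKey, Prod.mk.injEq] at h ⊢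
    split_ifs at h <;> omega

theorem squareKey_row (i j1 j2 : ℕ) (h : j1 < j2) : squareKey (i, j1) < squareKey (i, j2) := by
  have := Nat.pair_lt_pair_right i h
  simp only [squareKey, Prod.mk.injEq]
  split_ifs <;> omega

theorem squareKey_col (i1 i2 j : ℕ) (h : i1 < i2) : squareKey (i1, j) < squareKey (i2, j) := by
  have := Nat.pair_lt_pair_left j h
  simp only [squareKey, Prod.mk.injEq]
  split_ifs <;> omega

theorem armKey_row (i j1 j2 : ℕ) (h : j1 < j2) : armKey (i, j1) < armKey (i, j2) := by
  have := Nat.pair_lt_pair_right i h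
  simp only [armKey, Prod.mk.injEq]
  split_ifs <;> omega

theorem armKey_col (i1 i2 j : ℕ) (h : i1 < i2) : armKey (i1, j) < armKey (i2, j) := by
  have := Nat.pair_lt_pair_left j h
  simp only [armKey, Prod.mk.injEq]
  split_ifs <;> omega

theorem exists_square {μ : YoungDiagram} (h : (1, 1) ∈ μ) :
    ∃ T : SYT μ, T.entry 0 1 = 2 ∧ T.entry 1 0 = 3 ∧ T.entry 1 1 = 4 := by
  obtain ⟨T, hT⟩ := exists_syt_of_key μ squareKey squareKey_injective squareKey_row squareKey_col
  have h00 : (0, 0) ∈ μ := μ.up_left_mem (by omega) (by omega) h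
  have h01 : (0, 1) ∈ μ := μ.up_left_mem (by omega) (by omega) h
  have h10 : (1, 0) ∈ μ := μ.up_left_mem (by omega) (by omega) h
  refine ⟨T, ?_, ?_, ?_⟩
  · rw [hT (0, 1) h01, show μ.cells.filter (fun c' => squareKey c' ≤ squareKey (0, 1))
      = {(0, 0), (0, 1)} from ?_]
    · rfl
    · ext ⟨a, b⟩
      simp only [squareKey, Finset.mem_filter, YoungDiagram.mem_cells, Finset.mem_insert,
        Finset.mem_singleton, Prod.mk.injEq]
      grind
  · rw [hT (1, 0) h10, show μ.cells.filter (fun c' => squareKey c' ≤ squareKey (1, 0))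
      = {(0, 0), (0, 1), (1, 0)} from ?_]
    · rfl
    · ext ⟨a, b⟩
      simp only [squareKey, Finset.mem_filter, YoungDiagram.mem_cells, Finset.mem_insert,
        Finset.mem_singleton, Prod.mk.injEq]
      grind
  · rw [hT (1, 1) h, show μ.cells.filter (fun c' => squareKey c' ≤ squareKey (1, 1))
      = {(0, 0), (0, 1), (1, 0), (1, 1)} from ?_]
    · rfl
    · ext ⟨a, b⟩
      simp only [squareKey, Finset.mem_filter, YoungDiagram.mem_cells, Finset.mem_insert,
        Finset.mem_singleton, Prod.mk.injEq]
      grind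

theorem exists_arm_of_row {μ : YoungDiagram} (h10 : (1, 0) ∈ μ) (h : (0, 3) ∈ μ) :
    ∃ T : SYT μ, T.entry 0 1 = 2 ∧ T.entry 0 2 = 3 ∧ T.entry 1 0 = 4 ∧ T.entry 0 3 = 5 := by
  obtain ⟨T, hT⟩ := exists_syt_of_key μ armKey armKey_injective armKey_row armKey_col
  have h00 : (0, 0) ∈ μ := μ.up_left_mem (by omega) (by omega) h
  have h01 : (0, 1) ∈ μ := μ.up_left_mem (by omega) (by omega) h
  have h02 : (0, 2) ∈ μ := μ.up_left_mem (by omega) (by omega) h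
  refine ⟨T, ?_, ?_, ?_, ?_⟩
  · rw [hT (0, 1) h01, show μ.cells.filter (fun c' => armKey c' ≤ armKey (0, 1))
      = {(0, 0), (0, 1)} from ?_]
    · rfl
    · ext ⟨a, b⟩
      simp only [armKey, Finset.mem_filter, YoungDiagram.mem_cells, Finset.mem_insert,
        Finset.mem_singleton, Prod.mk.injEq]
      grind
  · rw [hT (0, 2) h02, show μ.cells.filter (fun c' => armKey c' ≤ armKey (0, 2))
      = {(0, 0), (0, 1), (0, 2)} from ?_]
    · rfl
    · ext ⟨a, b⟩
      simp only [armKey, Finset.mem_filter, YoungDiagram.mem_cells, Finset.mem_insert,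
        Finset.mem_singleton, Prod.mk.injEq]
      grind
  · rw [hT (1, 0) h10, show μ.cells.filter (fun c' => armKey c' ≤ armKey (1, 0))
      = {(0, 0), (0, 1), (0, 2), (1, 0)} from ?_]
    · rfl
    · ext ⟨a, b⟩
      simp only [armKey, Finset.mem_filter, YoungDiagram.mem_cells, Finset.mem_insert,
        Finset.mem_singleton, Prod.mk.injEq]
      grind
  · rw [hT (0, 3) h, show μ.cells.filter (fun c' => armKey c' ≤ armKey (0, 3))
      = {(0, 0), (0, 1), (0, 2), (1, 0), (0, 3)} from ?_]
    · rfl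
    · ext ⟨a, b⟩
      simp only [armKey, Finset.mem_filter, YoungDiagram.mem_cells, Finset.mem_insert,
        Finset.mem_singleton, Prod.mk.injEq]
      grind

/-- The tableau obtained by reflecting a filling of the transposed shape. -/
def SYT.transpose {μ : YoungDiagram} (T : SYT μ.transpose) : SYT μ where
  entry i j := T.entry j i
  zero_outside i j h := T.zero_outside j i (by simpa [YoungDiagram.mem_transpose] using h)
  row_strict i j1 j2 h hm :=
    T.col_strict j1 j2 i h (by simpa [YoungDiagram.mem_transpose] using hm)
  col_strict i1 i2 j h hm :=
    T.row_strict j i1 i2 h (by simpa [YoungDiagram.mem_transpose] using hm)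
  image_eq := by
    have hc : μ.transpose.cells = μ.cells.image Prod.swap := by
      ext c
      rw [YoungDiagram.mem_cells, YoungDiagram.mem_transpose, Finset.mem_image]
      exact ⟨fun h => ⟨c.swap, h, c.swap_swap⟩, by rintro ⟨d, hd, rfl⟩; simpa using hd⟩
    have hcard : μ.transpose.card = μ.card := by
      change μ.transpose.cells.card = μ.cells.card
      rw [hc, Finset.card_image_of_injective _ Prod.swap_injective]
    have := T.image_eq
    rw [hcard, hc, Finset.image_image] at this
    exact this

theorem exists_fix_two_not_fix_four {μ : YoungDiagram} (h11 : (1, 1) ∈ μ)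
    (hbig : (3, 0) ∈ μ ∨ (0, 3) ∈ μ) : ∃ T : SYT μ, BK μ 2 T = T ∧ BK μ 4 T ≠ T := by
  rcases hbig with h | h
  · obtain ⟨S, a, b, c, d⟩ := exists_arm_of_row (μ := μ.transpose)
      (by rw [YoungDiagram.mem_transpose]; exact μ.up_left_mem (by omega) (by omega) h11)
      (by rw [YoungDiagram.mem_transpose]; exact h)
    obtain ⟨T, hT⟩ : ∃ T : SYT μ, T.entry = fun i j => S.entry j i := ⟨S.transpose, rfl⟩
    have a' : T.entry 1 0 = 2 := by rw [hT]; exact a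
    have b' : T.entry 2 0 = 3 := by rw [hT]; exact b
    have c' : T.entry 0 1 = 4 := by rw [hT]; exact c
    have d' : T.entry 3 0 = 5 := by rw [hT]; exact d
    refine ⟨T, bk_fix_of_adj (by omega) ⟨1, 0, a', Or.inr b'⟩, fun hf => ?_⟩
    have h5 := (T.entry_bounds (T.mem_of_ne_zero (i := 3) (j := 0) (by omega))).2
    obtain ⟨i, j, h4, h5⟩ := (bk_fix_iff (by omega) (by omega)).1 hf
    obtain ⟨rfl, rfl⟩ := T.entry_inj (by omega) (h4.trans c'.symm)
    rcases h5 with h5 | h5 <;> have := T.entry_inj (by omega) (h5.trans d'.symm) <;> omega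
  · obtain ⟨T, a, b, c, d⟩ := exists_arm_of_row (μ.up_left_mem (by omega) (by omega) h11) h
    refine ⟨T, bk_fix_of_adj (by omega) ⟨0, 1, a, Or.inl b⟩, fun hf => ?_⟩
    have h5 := (T.entry_bounds (T.mem_of_ne_zero (i := 0) (j := 3) (by omega))).2
    obtain ⟨i, j, h4, h5⟩ := (bk_fix_iff (by omega) (by omega)).1 hf
    obtain ⟨rfl, rfl⟩ := T.entry_inj (by omega) (h4.trans c.symm)
    rcases h5 with h5 | h5 <;> have := T.entry_inj (by omega) (h5.trans d.symm) <;> omega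

/-! ### Comparison of the fixed-point counts -/

theorem natCard_lt_of_injective {α β : Type*} [Finite β] (f : α → β)
    (hf : Function.Injective f) {b : β} (hb : ∀ a, f a ≠ b) : Nat.card α < Nat.card β := by
  have := Finite.of_injective f hf
  have := Fintype.ofFinite α
  have := Fintype.ofFinite β
  rw [Nat.card_eq_fintype_card, Nat.card_eq_fintype_card]
  exact Fintype.card_lt_of_injective_of_notMem f hf (b := b) (by rintro ⟨a, ha⟩; exact hb a ha)

theorem fixedCount_two_mul_four_lt {μ : YoungDiagram} (h11 : (1, 1) ∈ μ)
    (hbig : (3, 0) ∈ μ ∨ (0, 3) ∈ μ) :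
    fixedCount (BK μ 2 * BK μ 4) < fixedCount (BK μ 2) := by
  obtain ⟨T, h2, h4⟩ := exists_fix_two_not_fix_four h11 hbig
  refine natCard_lt_of_injective (fun A => ⟨A.1, fix_two_of_fix_mul A.2⟩)
    (fun A B h => Subtype.ext (Subtype.mk.inj h)) (b := ⟨T, h2⟩) ?_
  rintro ⟨A, hA⟩ h
  obtain rfl : A = T := congrArg Subtype.val h
  rw [Equiv.Perm.mul_apply] at hA
  apply h4
  rw [← bk_invol 2 (BK μ 4 A), hA, h2]

theorem fixedCount_two_lt_three {μ : YoungDiagram} (h11 : (1, 1) ∈ μ) :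
    fixedCount (BK μ 2) < fixedCount (BK μ 3) := by
  classical
  obtain ⟨T, a, b, c⟩ := exists_square h11
  have hcard : 4 ≤ μ.card := c ▸ (T.entry_bounds h11).2
  have hT3 : BK μ 3 T = T := bk_fix_of_adj (by omega) ⟨1, 0, b, Or.inl c⟩
  have hT2 : BK μ 2 T ≠ T := by
    intro h
    rcases T.pos_of_fix_two (by omega) h with ⟨-, h3⟩ | ⟨h2, -⟩
    · have := T.entry_inj (by omega) (h3.trans b.symm)
      omega
    · omega
  -- `t_2` turns `1 2 / 3 4` into `1 3 / 2 4`, where `3` and `4` are neighbours again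
  have hT23 : BK μ 3 (BK μ 2 T) = BK μ 2 T :=
    bk_fix_of_adj (by omega) ⟨0, 1, by simp [bk_entry hT2, swapVal, a],
      Or.inr (by simp [bk_entry hT2, swapVal, c])⟩
  let f : {A : SYT μ // BK μ 2 A = A} → {A : SYT μ // BK μ 3 A = A} := fun A =>
    if h : BK μ 3 A.1 = A.1 then ⟨A.1, h⟩
    else ⟨BK μ 2 (BK μ 3 A.1), fix_three_of_fix_two hcard A.2 h⟩
  have f1 : ∀ A, BK μ 3 A.1 = A.1 → (f A).1 = A.1 := fun A h => by simp only [f, dif_pos h]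
  have f2 : ∀ A, BK μ 3 A.1 ≠ A.1 → (f A).1 = BK μ 2 (BK μ 3 A.1) := fun A h => by
    simp only [f, dif_neg h]
  -- the two branches of `f` cannot agree: `t_2 t_3 B = A` with `t_2 A = A` gives `t_3 B = A`
  have mixed : ∀ A B : {A : SYT μ // BK μ 2 A = A}, BK μ 3 A.1 = A.1 → BK μ 3 B.1 ≠ B.1 →
      A.1 ≠ BK μ 2 (BK μ 3 B.1) := by
    intro A B hA hB e
    have e' : BK μ 3 B.1 = A.1 := by rw [← bk_invol 2 (BK μ 3 B.1), ← e, A.2]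
    apply hB
    have := bk_invol 3 B.1
    rw [e', hA] at this
    rw [e', this]
  refine natCard_lt_of_injective f ?_ (b := ⟨T, hT3⟩) ?_
  · intro A B h
    have h' : (f A).1 = (f B).1 := congrArg Subtype.val h
    apply Subtype.ext
    by_cases hA : BK μ 3 A.1 = A.1 <;> by_cases hB : BK μ 3 B.1 = B.1
    · rwa [f1 A hA, f1 B hB] at h'
    · rw [f1 A hA, f2 B hB] at h'
      exact absurd h' (mixed A B hA hB)
    · rw [f2 A hA, f1 B hB] at h'
      exact absurd h'.symm (mixed B A hB hA)
    · rw [f2 A hA, f2 B hB] at h'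
      exact (BK μ 3).injective ((BK μ 2).injective h')
  · intro A h
    have h' : (f A).1 = T := congrArg Subtype.val h
    by_cases hA : BK μ 3 A.1 = A.1
    · rw [f1 A hA] at h'
      exact hT2 (h' ▸ A.2)
    · rw [f2 A hA] at h'
      have e : BK μ 3 A.1 = BK μ 2 T := by rw [← h', bk_invol]
      have e' : A.1 = BK μ 2 T := by rw [← bk_invol 3 A.1, e, hT23]
      exact hA (e.trans e'.symm)

/-- Theorem. For any non-hook-shaped partition `μ` of `n` that does not fit into the
`3 × 3` square (i.e. has more than 3 rows or more than 3 columns), the involutions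
`t_3`, `t_2` and `t_2 ∘ t_4` have pairwise different numbers of fixed points on
`SYT(μ)`. -/
theorem bk_fixed_points_pairwise_distinct (n : ℕ) (μ : YoungDiagram) (hμ : μ.card = n)
    (hh : ¬ HookShaped μ) (hbig : 3 < μ.colLen 0 ∨ 3 < μ.rowLen 0) :
    fixedCount (BK μ 3) ≠ fixedCount (BK μ 2) ∧
    fixedCount (BK μ 3) ≠ fixedCount (BK μ 2 * BK μ 4) ∧
    fixedCount (BK μ 2) ≠ fixedCount (BK μ 2 * BK μ 4) := by
  have h11 : (1, 1) ∈ μ := not_not.1 hh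
  have hbig' : (3, 0) ∈ μ ∨ (0, 3) ∈ μ :=
    hbig.imp YoungDiagram.mem_iff_lt_colLen.2 YoungDiagram.mem_iff_lt_rowLen.2
  have h1 := fixedCount_two_mul_four_lt h11 hbig'
  have h2 := fixedCount_two_lt_three h11
  exact ⟨h2.ne', (h1.trans h2).ne', h1.ne'⟩
end

section
/- For any non-hook-shaped partition λ of n with n ≥ 7, each of the three involutions t_3, t_2, and t_2∘t_4 has strictly more than |SYT(λ)|/8 fixed points on SYT(λ). -/
/-! ### Row words -/

/-- The filling of the plane encoded by a row word, whose head is the row of the largest entry: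
a letter `r` followed by the suffix `w` puts `w.length + 1` in the first free box of row `r`.
Boxes that are never reached carry `0`. -/
def ent : List ℕ → ℕ → ℕ → ℕ
  | [], _, _ => 0
  | r :: w, i, j => if i = r ∧ j = w.count r then w.length + 1 else ent w i j

/-- Lattice words, read from the right: each new letter `r` extends a row strictly shorter than
the row above it. -/
def LatticeWord : List ℕ → Prop
  | [] => True
  | r :: w => (r = 0 ∨ w.count r < w.count (r - 1)) ∧ LatticeWord w

/-- An enumeration of all lattice words of length `m`. -/
def words : ℕ → List (List ℕ)
  | 0 => [[]]
  | m + 1 => (words m).flatMap fun w =>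
      ((List.range (m + 1)).filter fun r => r == 0 || decide (w.count r < w.count (r - 1))).map
        (· :: w)

/-- The entries `k` and `k + 1` of the encoded filling lie in the same row, or in the same
column. Here `b` and `a` are the rows of `k + 1` and `k`, and the counts are their columns. -/
def adj (k : ℕ) (w : List ℕ) : Bool :=
  match w.drop (w.length - (k + 1)) with
  | b :: a :: s => a == b || s.count a == (a :: s).count b
  | _ => false

/-- The shape of a word of length at most `7`, as the list of the lengths of its rows. -/
def key (v : List ℕ) : List ℕ := (List.range 7).map fun i => v.count i

/-- For every shape of size `7`, more than one eighth of the lattice words satisfy `P`. -/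
def Good (P : List ℕ → Bool) : Prop :=
  ∀ K ∈ ((words 7).map key).dedup, ((words 7).filter fun v => key v == K).length <
    8 * ((words 7).filter fun v => P v && key v == K).length

instance (P : List ℕ → Bool) : Decidable (Good P) := by unfold Good; infer_instance

/-! ### The finite computation in size seven -/

theorem words_seven_nodup : (words 7).Nodup := by decide +kernel

theorem good_three : Good (adj 3) := by decide +kernel

theorem good_two : Good (adj 2) := by decide +kernel

theorem good_two_four : Good (fun w => adj 2 w && adj 4 w) := by decide +kernel

/-! ### Lattice words -/

theorem LatticeWord.lt_length {w : List ℕ} (h : LatticeWord w) : ∀ r ∈ w, r < w.length := by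
  induction w with
  | nil => simp
  | cons a w ih =>
    obtain ⟨h1, h2⟩ := h
    intro r hr
    rcases List.mem_cons.1 hr with rfl | hr
    · rcases h1 with rfl | h1
      · simp
      · have := ih h2 _ (List.count_pos_iff.1 (by omega : 0 < w.count (r - 1)))
        simp only [List.length_cons]
        omega
    · have := ih h2 r hr
      simp only [List.length_cons]
      omega

theorem mem_words {m : ℕ} {w : List ℕ} : w ∈ words m ↔ LatticeWord w ∧ w.length = m := by
  induction m generalizing w with
  | zero =>
    simp only [words, List.mem_singleton, List.length_eq_zero_iff]
    exact ⟨fun h => ⟨h ▸ trivial, h⟩, fun h => h.2⟩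
  | succ m ih =>
    simp only [words, List.mem_flatMap, List.mem_map, List.mem_filter, List.mem_range,
      Bool.or_eq_true, beq_iff_eq, decide_eq_true_eq, ih]
    constructor
    · rintro ⟨v, ⟨hv, hl⟩, r, ⟨hr, hc⟩, rfl⟩
      exact ⟨⟨hc, hv⟩, by simp [hl]⟩
    · rintro ⟨hw, hl⟩
      cases w with
      | nil => simp at hl
      | cons r v =>
        have := hw.lt_length r (by simp)
        exact ⟨v, ⟨hw.2, by simpa using hl⟩, r, ⟨by omega, hw.1⟩, rfl⟩

theorem LatticeWord.count_antitone {w : List ℕ} (h : LatticeWord w) :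
    Antitone fun i => w.count i := by
  induction w with
  | nil => intro i j _; simp
  | cons a w ih =>
    refine antitone_nat_of_succ_le fun i => ?_
    have h1 := ih h.2 (Nat.le_add_right i 1)
    have h2 := h.1
    simp only [List.count_cons, beq_iff_eq] at h1 ⊢
    by_cases ha : a = i + 1
    · subst ha
      simp at h2 h1 ⊢
      omega
    · simp only [ha, if_false]
      omega

theorem LatticeWord.of_append {u v : List ℕ} (h : LatticeWord (u ++ v)) : LatticeWord v := by
  induction u with
  | nil => exact h
  | cons a u ih => exact ih h.2

/-- The lattice condition on a prefix only sees the letter counts of the suffix. -/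
theorem LatticeWord.append_congr {u v v' : List ℕ} (h : LatticeWord (u ++ v))
    (hv' : LatticeWord v') (hc : ∀ i, v'.count i = v.count i) : LatticeWord (u ++ v') := by
  induction u with
  | nil => exact hv'
  | cons a u ih =>
    refine ⟨?_, ih h.2⟩
    have := h.1
    simpa [List.count_append, hc] using this

theorem key_eq_iff {v v' : List ℕ} (hv : v ∈ words 7) (hv' : v' ∈ words 7) :
    key v = key v' ↔ ∀ i, v.count i = v'.count i := by
  rw [mem_words] at hv hv'
  constructor
  · intro h i
    by_cases hi : i < 7
    · simp only [key, List.map_inj_left, List.mem_range] at h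
      exact h i hi
    · rw [List.count_eq_zero_of_not_mem, List.count_eq_zero_of_not_mem]
      · intro hm; have := hv'.1.lt_length i hm; omega
      · intro hm; have := hv.1.lt_length i hm; omega
  · intro h
    simp [key, h]

/-! ### The filling encoded by a word -/

theorem ent_le (w : List ℕ) (i j : ℕ) : ent w i j ≤ w.length := by
  induction w with
  | nil => simp [ent]
  | cons a w ih =>
    simp only [ent, List.length_cons]
    split_ifs <;> omega

theorem ent_eq_zero {w : List ℕ} {i j : ℕ} (h : w.count i ≤ j) : ent w i j = 0 := by
  induction w with
  | nil => rfl
  | cons a w ih =>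
    simp only [List.count_cons, beq_iff_eq] at h
    simp only [ent]
    rw [if_neg, ih (by omega)]
    rintro ⟨rfl, rfl⟩
    simp at h

theorem ent_pos {w : List ℕ} {i j : ℕ} (h : j < w.count i) : 0 < ent w i j := by
  induction w with
  | nil => simp at h
  | cons a w ih =>
    simp only [List.count_cons, beq_iff_eq] at h
    simp only [ent]
    split_ifs with hc
    · omega
    · refine ih ?_
      split_ifs at h with ha
      · subst ha
        simp only [true_and] at hc
        omega
      · omega

/-- The last box added in row `r` carries the largest entry. -/
theorem ent_cons_self (r : ℕ) (w : List ℕ) : ent (r :: w) r (w.count r) = w.length + 1 := by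
  simp [ent]

theorem ent_append {u v : List ℕ} {i j : ℕ} (h : j < v.count i) :
    ent (u ++ v) i j = ent v i j := by
  induction u with
  | nil => rfl
  | cons a u ih =>
    simp only [List.cons_append, ent]
    rw [if_neg, ih]
    rintro ⟨rfl, rfl⟩
    rw [List.count_append] at h
    omega

theorem ent_row (w : List ℕ) {i j1 j2 : ℕ} (hj : j1 < j2) (h : j2 < w.count i) :
    ent w i j1 < ent w i j2 := by
  induction w with
  | nil => simp at h
  | cons a w ih =>
    simp only [List.count_cons, beq_iff_eq] at h
    simp only [ent]
    have := ent_le w i j1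
    split_ifs with h1 h2 h2
    · omega
    · obtain ⟨rfl, rfl⟩ := h1
      simp at h
      omega
    · omega
    · refine ih ?_
      split_ifs at h with ha
      · subst ha
        simp only [true_and] at h2
        omega
      · omega

theorem ent_col {w : List ℕ} (hw : LatticeWord w) {i1 i2 j : ℕ} (hi : i1 < i2)
    (h : j < w.count i2) : ent w i1 j < ent w i2 j := by
  induction w with
  | nil => simp at h
  | cons a w ih =>
    have hanti := hw.2.count_antitone hi.le
    simp only [List.count_cons, beq_iff_eq] at h hanti
    simp only [ent]
    have := ent_le w i1 j
    split_ifs with h1 h2 h2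
    · omega
    · -- a box below the newest one would contradict the weakly decreasing row lengths
      obtain ⟨rfl, rfl⟩ := h1
      rw [if_neg (by omega)] at h
      omega
    · omega
    · refine ih hw.2 ?_
      split_ifs at h with ha
      · subst ha
        simp only [true_and] at h2
        omega
      · omega

theorem ent_surj (w : List ℕ) {k : ℕ} (h1 : 1 ≤ k) (h2 : k ≤ w.length) :
    ∃ i j, j < w.count i ∧ ent w i j = k := by
  induction w with
  | nil => simp at h2; omega
  | cons a w ih =>
    rcases Nat.lt_or_ge w.length k with hk | hk
    · refine ⟨a, w.count a, by simp, ?_⟩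
      rw [ent_cons_self]
      simp at h2
      omega
    · obtain ⟨i, j, hj, he⟩ := ih hk
      refine ⟨i, j, ?_, ?_⟩
      · simp only [List.count_cons]
        omega
      · rw [show a :: w = [a] ++ w from rfl, ent_append hj, he]

theorem ent_inj (w : List ℕ) {i j i' j' : ℕ} (h : j < w.count i) (hb : j' < w.count i')
    (he : ent w i j = ent w i' j') : i = i' ∧ j = j' := by
  induction w with
  | nil => simp at h
  | cons a w ih =>
    have b1 := ent_le w i j
    have b2 := ent_le w i' j'
    simp only [List.count_cons, beq_iff_eq] at h hb
    simp only [ent] at he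
    split_ifs at he with h1 h2 h2
    · exact ⟨h1.1.trans h2.1.symm, by rw [h1.2, h2.2]⟩
    · omega
    · omega
    · refine ih ?_ ?_ he
      · by_cases ha : a = i
        · subst ha; simp at h h1; omega
        · simp [ha] at h; omega
      · by_cases ha : a = i'
        · subst ha; simp at hb h2; omega
        · simp [ha] at hb; omega

/-- A word is determined by its filling: the position of the largest entry gives the head. -/
theorem ent_injective {w w' : List ℕ} (hl : w.length = w'.length) (he : ent w = ent w') :
    w = w' := by
  induction w generalizing w' with
  | nil => exact (List.length_eq_zero_iff.1 hl.symm).symm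
  | cons a w ih =>
    cases w' with
    | nil => simp at hl
    | cons b w' =>
      have hl' : w.length = w'.length := by simpa using hl
      have h0 := congrFun (congrFun he a) (w.count a)
      rw [ent_cons_self] at h0
      have hb : a = b ∧ w.count a = w'.count b := by
        by_contra hc
        simp only [ent, if_neg hc] at h0
        have := ent_le w' a (w.count a)
        omega
      obtain ⟨rfl, hcount⟩ := hb
      congr 1
      refine ih hl' ?_
      funext i j
      have h1 := congrFun (congrFun he i) j
      simp only [ent, ← hcount] at h1
      split_ifs at h1 with hc
      · obtain ⟨rfl, rfl⟩ := hc
        rw [ent_eq_zero le_rfl, ent_eq_zero hcount.ge]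
      · exact h1

/-- Every standard filling `e` of the diagram with row lengths `c` comes from a lattice word:
remove the largest entry and recurse. -/
theorem exists_word_aux (n : ℕ) : ∀ (c : ℕ → ℕ) (e : ℕ → ℕ → ℕ), Antitone c →
    (∀ i j, c i ≤ j → e i j = 0) →
    (∀ i j1 j2, j1 < j2 → j2 < c i → e i j1 < e i j2) →
    (∀ i1 i2 j, i1 < i2 → j < c i2 → e i1 j < e i2 j) →
    (∀ k, 1 ≤ k → k ≤ n → ∃ i j, j < c i ∧ e i j = k) →
    (∀ i j, j < c i → 1 ≤ e i j ∧ e i j ≤ n) →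
    (∀ i j i' j', j < c i → j' < c i' → e i j = e i' j' → i = i' ∧ j = j') →
    ∃ w, LatticeWord w ∧ w.length = n ∧ (∀ i, w.count i = c i) ∧ ent w = e := by
  induction n with
  | zero =>
    intro c e _ hz _ _ _ hr _
    have hc : ∀ i, c i = 0 := fun i => by
      by_contra h
      have := hr i 0 (by omega)
      omega
    refine ⟨[], trivial, rfl, fun i => by simp [hc], ?_⟩
    funext i j
    rw [hz i j (by simp [hc])]
    rfl
  | succ n ih =>
    intro c e ha hz hrow hcol hs hr hinj
    obtain ⟨r, s, hrs, hers⟩ := hs (n + 1) (by omega) le_rfl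
    -- the largest entry ends its row and its column
    have hc : c r = s + 1 := by
      by_contra h
      have h1 := hrow r s (s + 1) (by omega) (by omega)
      have h2 := hr r (s + 1) (by omega)
      omega
    have hc2 : ∀ i, r < i → c i ≤ s := by
      intro i hi
      by_contra h
      have h1 := hcol r i s hi (by omega)
      have h2 := hr i s (by omega)
      omega
    have hin : ∀ {i j}, j < Function.update c r s i → j < c i ∧ ¬ (i = r ∧ j = s) := by
      intro i j h
      by_cases hi : i = r
      · subst hi; simp at h; omega
      · simp [hi] at h; exact ⟨h, by tauto⟩
    obtain ⟨w, hw, hl, hcw, hew⟩ := ih (Function.update c r s)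
      (fun i j => if i = r ∧ j = s then 0 else e i j)
      (by
        intro i j hij
        have hh := ha hij
        by_cases hi : i = r <;> by_cases hj : j = r
        · simp [hi, hj]
        · subst hi
          simpa [hj] using hc2 j (by omega)
        · subst hj
          simp [hi]
          omega
        · simpa [hi, hj] using hh)
      (by
        intro i j h
        split_ifs with h1
        · rfl
        · apply hz
          by_cases hi : i = r
          · subst hi; simp at h h1; omega
          · simpa [hi] using h)
      (by
        intro i j1 j2 hj h
        have := hin h
        have h1 := hrow i j1 j2 hj this.1
        rw [if_neg this.2]
        split_ifs <;> omega)
      (by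
        intro i1 i2 j hi h
        have := hin h
        have h1 := hcol i1 i2 j hi this.1
        rw [if_neg this.2]
        split_ifs <;> omega)
      (by
        intro k h1 h2
        obtain ⟨i, j, hj, he⟩ := hs k h1 (by omega)
        have hne : ¬ (i = r ∧ j = s) := by
          rintro ⟨rfl, rfl⟩
          omega
        refine ⟨i, j, ?_, by rw [if_neg hne, he]⟩
        by_cases hi : i = r
        · subst hi; simp at hne ⊢; omega
        · simpa [hi] using hj)
      (by
        intro i j h
        have := hin h
        have h1 := hr i j this.1
        rw [if_neg this.2]
        refine ⟨h1.1, ?_⟩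
        by_contra h2
        exact this.2 (hinj i j r s this.1 hrs (by omega)))
      (by
        intro i j i' j' h h' he
        have h1 := hin h
        have h2 := hin h'
        rw [if_neg h1.2, if_neg h2.2] at he
        exact hinj i j i' j' h1.1 h2.1 he)
    have hcr : w.count r = s := by rw [hcw]; simp
    refine ⟨r :: w, ⟨?_, hw⟩, by simp [hl], ?_, ?_⟩
    · rcases Nat.eq_zero_or_pos r with h0 | h0
      · exact Or.inl h0
      · right
        rw [hcr, hcw, Function.update_of_ne (by omega)]
        have := ha (Nat.sub_le r 1)
        omega
    · intro i
      rw [List.count_cons, hcw]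
      by_cases hi : i = r
      · subst hi; simp [hc]
      · simp [hi, Ne.symm hi]
    · funext i j
      simp only [ent, hcr, hl, hew]
      split_ifs with h
      · rw [h.1, h.2, hers]
      · rfl

/-! ### Tableaux and words of a given shape -/

open Classical in
/-- The row words of the tableaux of shape `μ`. -/
noncomputable def shapeWords (μ : YoungDiagram) : Finset (List ℕ) :=
  (words μ.card).toFinset.filter fun w => ∀ i, w.count i = μ.rowLen i

theorem mem_shapeWords {μ : YoungDiagram} {w : List ℕ} :
    w ∈ shapeWords μ ↔ (LatticeWord w ∧ w.length = μ.card) ∧ ∀ i, w.count i = μ.rowLen i := by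
  simp [shapeWords, mem_words]

theorem exists_word {μ : YoungDiagram} (T : SYT μ) : ∃ w ∈ shapeWords μ, ent w = T.entry := by
  have hmem : ∀ i j, j < μ.rowLen i ↔ (i, j) ∈ μ := fun i j => YoungDiagram.mem_iff_lt_rowLen.symm
  have himg := T.image_eq
  have hinj : Set.InjOn (fun c : ℕ × ℕ => T.entry c.1 c.2) μ.cells := by
    rw [← Finset.card_image_iff, himg]
    simp [YoungDiagram.card]
  obtain ⟨w, h1, h2, h3, h4⟩ := exists_word_aux μ.card μ.rowLen T.entry
    (fun i j h => μ.rowLen_anti i j h)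
    (fun i j h => T.zero_outside i j (by rw [← hmem]; omega))
    (fun i j1 j2 hj h => T.row_strict i j1 j2 hj ((hmem _ _).1 h))
    (fun i1 i2 j hi h => T.col_strict i1 i2 j hi ((hmem _ _).1 h))
    (fun k h1 h2 => by
      have : k ∈ Finset.Icc 1 μ.card := Finset.mem_Icc.2 ⟨h1, h2⟩
      rw [← himg, Finset.mem_image] at this
      obtain ⟨⟨i, j⟩, hc, he⟩ := this
      exact ⟨i, j, (hmem _ _).2 hc, he⟩)
    (fun i j h => by
      rw [← Finset.mem_Icc, ← himg]
      exact Finset.mem_image_of_mem (fun c : ℕ × ℕ => T.entry c.1 c.2)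
        ((YoungDiagram.mem_cells _).2 ((hmem i j).1 h)))
    (fun i j i' j' h h' he => by
      have := hinj ((YoungDiagram.mem_cells _).2 ((hmem i j).1 h))
        ((YoungDiagram.mem_cells _).2 ((hmem i' j').1 h')) he
      simpa using this)
  exact ⟨w, mem_shapeWords.2 ⟨⟨h1, h2⟩, h3⟩, h4⟩

theorem exists_tableau {μ : YoungDiagram} {w : List ℕ} (hw : w ∈ shapeWords μ) :
    ∃ T : SYT μ, T.entry = ent w := by
  obtain ⟨⟨hL, hl⟩, hc⟩ := mem_shapeWords.1 hw
  have hmem : ∀ i j, (i, j) ∈ μ ↔ j < w.count i := fun i j => by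
    rw [hc, YoungDiagram.mem_iff_lt_rowLen]
  refine ⟨⟨ent w, ?_, ?_, ?_, ?_⟩, rfl⟩
  · intro i j h
    rw [hmem] at h
    exact ent_eq_zero (by omega)
  · intro i j1 j2 hj h
    exact ent_row w hj ((hmem _ _).1 h)
  · intro i1 i2 j hi h
    exact ent_col hL hi ((hmem _ _).1 h)
  · ext k
    simp only [Finset.mem_image, Finset.mem_Icc, YoungDiagram.mem_cells, Prod.exists]
    constructor
    · rintro ⟨i, j, h, rfl⟩
      exact ⟨ent_pos ((hmem _ _).1 h), hl ▸ ent_le w i j⟩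
    · rintro ⟨h1, h2⟩
      obtain ⟨i, j, hj, he⟩ := ent_surj w h1 (hl ▸ h2)
      exact ⟨i, j, (hmem _ _).2 hj, he⟩

/-- The tableau of shape `μ` with a given row word. -/
noncomputable def toTab {μ : YoungDiagram} (w : {w // w ∈ shapeWords μ}) : SYT μ :=
  (exists_tableau w.2).choose

theorem toTab_entry {μ : YoungDiagram} (w : {w // w ∈ shapeWords μ}) :
    (toTab w).entry = ent w.1 := (exists_tableau w.2).choose_spec

theorem toTab_bijective (μ : YoungDiagram) : Function.Bijective (toTab (μ := μ)) := by
  constructor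
  · intro w w' h
    apply Subtype.ext
    refine ent_injective ?_ ?_
    · rw [(mem_shapeWords.1 w.2).1.2, (mem_shapeWords.1 w'.2).1.2]
    · rw [← toTab_entry, ← toTab_entry, h]
  · intro T
    obtain ⟨w, hw, he⟩ := exists_word T
    exact ⟨⟨w, hw⟩, SYT.ext' ((toTab_entry _).trans he)⟩

theorem card_SYT (μ : YoungDiagram) : Nat.card (SYT μ) = (shapeWords μ).card := by
  rw [← Nat.card_congr (Equiv.ofBijective _ (toTab_bijective μ)), Nat.card_eq_fintype_card,
    Fintype.card_coe]

/-- The word of the row-by-row filling of the first `k` rows. -/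
def rowReading (c : ℕ → ℕ) : ℕ → List ℕ
  | 0 => []
  | k + 1 => List.replicate (c k) k ++ rowReading c k

theorem count_rowReading (c : ℕ → ℕ) (k i : ℕ) :
    (rowReading c k).count i = if i < k then c i else 0 := by
  induction k with
  | zero => simp [rowReading]
  | succ k ih =>
    simp only [rowReading, List.count_append, List.count_replicate, ih, beq_iff_eq]
    rcases lt_trichotomy i k with h | rfl | h
    · rw [if_neg (by omega), if_pos h, if_pos (by omega)]; omega
    · simp
    · rw [if_neg (by omega), if_neg (by omega), if_neg (by omega)]

theorem latticeWord_rowReading {c : ℕ → ℕ} (hc : Antitone c) (k : ℕ) :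
    LatticeWord (rowReading c k) := by
  induction k with
  | zero => trivial
  | succ k ih =>
    have key : ∀ m ≤ c k, LatticeWord (List.replicate m k ++ rowReading c k) := by
      intro m
      induction m with
      | zero => intro _; exact ih
      | succ m ihm =>
        intro hm
        refine ⟨?_, ihm (by omega)⟩
        rcases Nat.eq_zero_or_pos k with h0 | h0
        · exact Or.inl h0
        · right
          have := hc (Nat.sub_le k 1)
          change List.count k (List.replicate m k ++ _) <
            List.count (k - 1) (List.replicate m k ++ _)
          simp only [List.count_append, List.count_replicate, count_rowReading, beq_iff_eq]
          rw [if_pos trivial, if_neg (by omega), if_neg (by omega), if_pos (by omega)]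
          omega
    exact key _ le_rfl

theorem length_eq_card {μ : YoungDiagram} {w : List ℕ} (hc : ∀ i, w.count i = μ.rowLen i) :
    w.length = μ.card := by
  have hmem : ∀ i j, (i, j) ∈ μ ↔ j < w.count i := fun i j => by
    rw [hc, YoungDiagram.mem_iff_lt_rowLen]
  have himg : μ.cells.image (fun c => ent w c.1 c.2) = Finset.Icc 1 w.length := by
    ext k
    simp only [Finset.mem_image, Finset.mem_Icc, YoungDiagram.mem_cells, Prod.exists]
    constructor
    · rintro ⟨i, j, h, rfl⟩
      exact ⟨ent_pos ((hmem _ _).1 h), ent_le w i j⟩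
    · rintro ⟨h1, h2⟩
      obtain ⟨i, j, hj, he⟩ := ent_surj w h1 h2
      exact ⟨i, j, (hmem _ _).2 hj, he⟩
  have hcard := congrArg Finset.card himg
  rw [Finset.card_image_of_injOn] at hcard
  · simpa [YoungDiagram.card] using hcard.symm
  · rintro ⟨i, j⟩ h ⟨i', j'⟩ h' he
    have := ent_inj w ((hmem i j).1 ((YoungDiagram.mem_cells _).1 h))
      ((hmem i' j').1 ((YoungDiagram.mem_cells _).1 h')) he
    simpa using this

theorem shapeWords_nonempty (μ : YoungDiagram) : (shapeWords μ).Nonempty := by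
  have hc : ∀ i, (rowReading μ.rowLen (μ.colLen 0)).count i = μ.rowLen i := by
    intro i
    rw [count_rowReading]
    split_ifs with h
    · rfl
    · by_contra h0
      exact h (YoungDiagram.mem_iff_lt_colLen.1
        (YoungDiagram.mem_iff_lt_rowLen.2 (Nat.pos_of_ne_zero (Ne.symm h0))))
  exact ⟨_, mem_shapeWords.2
    ⟨⟨latticeWord_rowReading (fun i j h => μ.rowLen_anti i j h) _, length_eq_card hc⟩, hc⟩⟩

/-! ### Fixed points -/

/-- If `k` and `k + 1` share a row or a column, swapping them breaks strictness, so `t_k` does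
nothing. -/
theorem bkFun_eq_self {μ : YoungDiagram} {k : ℕ} {T : SYT μ} (hk : 1 ≤ k)
    (h : (∃ i j1 j2, T.entry i j1 = k ∧ T.entry i j2 = k + 1) ∨
      ∃ i1 i2 j, T.entry i1 j = k ∧ T.entry i2 j = k + 1) : bkFun μ k T = T := by
  apply bkFun_neg
  rintro ⟨T', hT'⟩
  have hin : ∀ i j, T.entry i j ≠ 0 → (i, j) ∈ μ := fun i j h => by
    by_contra hc
    exact h (T.zero_outside i j hc)
  have s1 : swapVal k k = k + 1 := by simp [swapVal]
  have s2 : swapVal k (k + 1) = k := by simp [swapVal]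
  rcases h with ⟨i, j1, j2, h1, h2⟩ | ⟨i1, i2, j, h1, h2⟩
  · rcases lt_trichotomy j1 j2 with hlt | rfl | hlt
    · have := T'.row_strict i j1 j2 hlt (hin _ _ (by omega))
      simp only [hT', h1, h2, s1, s2] at this
      omega
    · omega
    · have := T.row_strict i j2 j1 hlt (hin _ _ (by omega))
      omega
  · rcases lt_trichotomy i1 i2 with hlt | rfl | hlt
    · have := T'.col_strict i1 i2 j hlt (hin _ _ (by omega))
      simp only [hT', h1, h2, s1, s2] at this
      omega
    · omega
    · have := T.col_strict i2 i1 j hlt (hin _ _ (by omega))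
      omega

theorem BK_toTab {μ : YoungDiagram} {k : ℕ} (hk : 1 ≤ k) (hkn : k + 1 ≤ μ.card)
    (w : {w // w ∈ shapeWords μ}) (h : adj k w.1 = true) : BK μ k (toTab w) = toTab w := by
  refine bkFun_eq_self hk ?_
  rw [toTab_entry]
  have hl := (mem_shapeWords.1 w.2).1.2
  obtain ⟨w, hw⟩ := w
  dsimp only at hl h ⊢
  have hsplit := List.take_append_drop (w.length - (k + 1)) w
  have hdl : (w.drop (w.length - (k + 1))).length = k + 1 := by
    rw [List.length_drop]; omega
  unfold adj at h
  split at h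
  · rename_i b a s heq
    rw [heq] at hsplit hdl
    have hs : s.length + 1 = k := by simpa using hdl
    have e1 : ent w a (s.count a) = k := by
      rw [← hsplit, ent_append (by simp only [List.count_cons, beq_self_eq_true, if_true]; omega),
        show b :: a :: s = [b] ++ (a :: s) from rfl, ent_append (by simp), ent_cons_self, hs]
    have e2 : ent w b ((a :: s).count b) = k + 1 := by
      rw [← hsplit, ent_append (by simp), ent_cons_self, List.length_cons, hs]
    simp only [Bool.or_eq_true, beq_iff_eq] at h
    rcases h with rfl | h
    · exact Or.inl ⟨a, _, _, e1, e2⟩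
    · rw [← h] at e2
      exact Or.inr ⟨a, b, _, e1, e2⟩
  · simp at h

theorem adj_append {k : ℕ} (u : List ℕ) {v : List ℕ} (h : k + 1 ≤ v.length) :
    adj k (u ++ v) = adj k v := by
  have : (u ++ v).drop ((u ++ v).length - (k + 1)) = v.drop (v.length - (k + 1)) := by
    rw [List.length_append, show u.length + v.length - (k + 1) = u.length + (v.length - (k + 1)) by
      omega, List.drop_append]
    simp
  unfold adj
  rw [this]

/-! ### Reduction to size seven -/

/-- The words of shape `μ` agreeing with `w₀` before the last seven letters correspond to the
lattice words of length `7` with the same shape as the end of `w₀`; the correspondence respects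
any property `Q` that only depends on the last seven letters. -/
theorem card_fiber {μ : YoungDiagram} (hn : 7 ≤ μ.card) {Q : List ℕ → Bool}
    (hQ : ∀ u v : List ℕ, v.length = 7 → Q (u ++ v) = Q v) {w₀ : List ℕ} (hw₀ : w₀ ∈ shapeWords μ) :
    (((shapeWords μ).filter fun w => Q w = true).filter
      fun w => w.take (μ.card - 7) = w₀.take (μ.card - 7)).card =
    ((words 7).filter fun v => Q v && key v == key (w₀.drop (μ.card - 7))).length := by
  obtain ⟨⟨hL, hl⟩, hc⟩ := mem_shapeWords.1 hw₀
  set u := w₀.take (μ.card - 7) with hu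
  set v₀ := w₀.drop (μ.card - 7) with hv₀
  have huv : u ++ v₀ = w₀ := List.take_append_drop _ _
  have hul : u.length = μ.card - 7 := by rw [hu, List.length_take]; omega
  have hv₀w : v₀ ∈ words 7 := by
    rw [mem_words]
    exact ⟨LatticeWord.of_append (huv ▸ hL), by rw [hv₀, List.length_drop]; omega⟩
  rw [← List.toFinset_card_of_nodup (words_seven_nodup.filter _),
    ← Finset.card_image_of_injective (List.toFinset _) (List.append_right_injective u)]
  congr 1
  ext w
  simp only [Finset.mem_filter, Finset.mem_image, List.mem_toFinset, List.mem_filter,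
    Bool.and_eq_true, beq_iff_eq]
  constructor
  · rintro ⟨⟨hw, hq⟩, ht⟩
    obtain ⟨⟨hL', hl'⟩, hc'⟩ := mem_shapeWords.1 hw
    have hsplit := List.take_append_drop (μ.card - 7) w
    rw [ht] at hsplit
    have hvl : (w.drop (μ.card - 7)).length = 7 := by rw [List.length_drop]; omega
    have hvw : w.drop (μ.card - 7) ∈ words 7 :=
      mem_words.2 ⟨LatticeWord.of_append (u := u) (by rw [hsplit]; exact hL'), hvl⟩
    refine ⟨w.drop (μ.card - 7), ⟨hvw, ?_, ?_⟩, hsplit⟩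
    · rw [← hQ u _ hvl, hsplit, hq]
    · rw [key_eq_iff hvw hv₀w]
      intro i
      have h1 := hc' i
      rw [← hc i, ← hsplit, ← huv, List.count_append, List.count_append] at h1
      omega
  · rintro ⟨v, ⟨hv, hq, hk⟩, rfl⟩
    rw [key_eq_iff hv hv₀w] at hk
    obtain ⟨hvL, hvl⟩ := mem_words.1 hv
    refine ⟨⟨mem_shapeWords.2 ⟨⟨?_, ?_⟩, fun i => ?_⟩, ?_⟩, ?_⟩
    · exact LatticeWord.append_congr (huv.symm ▸ hL) hvL hk
    · rw [List.length_append]; omega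
    · rw [List.count_append, hk, ← List.count_append, huv, hc]
    · rw [hQ u v hvl, hq]
    · rw [← hul, List.take_left]

/-- A bound valid in size `7` holds for all larger shapes, by summing over the classes of words
with a common beginning. -/
theorem card_lt_of_good {μ : YoungDiagram} (hn : 7 ≤ μ.card) {P : List ℕ → Bool}
    (hP : ∀ u v : List ℕ, v.length = 7 → P (u ++ v) = P v) (hG : Good P) :
    (shapeWords μ).card < 8 * ((shapeWords μ).filter fun w => P w = true).card := by
  set f : List ℕ → List ℕ := fun w => w.take (μ.card - 7) with hf
  have hmap : ∀ w ∈ shapeWords μ, f w ∈ (shapeWords μ).image f :=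
    fun w hw => Finset.mem_image_of_mem f hw
  rw [Finset.card_eq_sum_card_fiberwise hmap,
    Finset.card_eq_sum_card_fiberwise (s := (shapeWords μ).filter fun w => P w = true)
      (fun w hw => hmap w (Finset.mem_filter.1 hw).1), Finset.mul_sum]
  refine Finset.sum_lt_sum_of_nonempty ((shapeWords_nonempty μ).image f) ?_
  intro u hu
  obtain ⟨w₀, hw₀, rfl⟩ := Finset.mem_image.1 hu
  have h1 := card_fiber hn (Q := fun _ => true) (fun _ _ _ => rfl) hw₀
  have h2 := card_fiber hn hP hw₀
  simp only [Finset.filter_true, Bool.true_and] at h1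
  simp only [hf]
  rw [h1, h2]
  obtain ⟨⟨hL, hl⟩, -⟩ := mem_shapeWords.1 hw₀
  refine hG _ (List.mem_dedup.2 (List.mem_map_of_mem (mem_words.2 ⟨?_, ?_⟩)))
  · exact LatticeWord.of_append (u := w₀.take (μ.card - 7)) (by rwa [List.take_append_drop])
  · rw [List.length_drop]; omega

theorem card_lt_fixedCount {μ : YoungDiagram} (hn : 7 ≤ μ.card) {P : List ℕ → Bool}
    (hP : ∀ u v : List ℕ, v.length = 7 → P (u ++ v) = P v) (hG : Good P)
    {g : Equiv.Perm (SYT μ)}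
    (hg : ∀ w : {w // w ∈ shapeWords μ}, P w.1 = true → g (toTab w) = toTab w) :
    Nat.card (SYT μ) < 8 * fixedCount g := by
  have hfin : Finite (SYT μ) := Finite.of_surjective _ (toTab_bijective μ).2
  refine (card_SYT μ).trans_lt ((card_lt_of_good hn hP hG).trans_le (Nat.mul_le_mul_left 8 ?_))
  rw [← Fintype.card_coe, ← Nat.card_eq_fintype_card]
  refine Nat.card_le_card_of_injective
    (fun w => ⟨toTab ⟨w.1, (Finset.mem_filter.1 w.2).1⟩, hg _ (Finset.mem_filter.1 w.2).2⟩) ?_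
  intro w w' h
  have htab : toTab ⟨w.1, (Finset.mem_filter.1 w.2).1⟩ =
      toTab ⟨w'.1, (Finset.mem_filter.1 w'.2).1⟩ :=
    Subtype.ext_iff.1 h
  have hsub := (toTab_bijective μ).1 htab
  exact Subtype.ext (Subtype.mk.inj hsub)

/-- Theorem. For any non-hook-shaped partition `μ` of `n ≥ 7`, each of the
involutions `t_3`, `t_2` and `t_2 ∘ t_4` has strictly more than `|SYT(μ)| / 8`
fixed points on `SYT(μ)`. -/
theorem bk_fixed_points_many (n : ℕ) (μ : YoungDiagram) (hμ : μ.card = n)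
    (hn : 7 ≤ n) (hh : ¬ HookShaped μ) :
    Nat.card (SYT μ) < 8 * fixedCount (BK μ 3) ∧
    Nat.card (SYT μ) < 8 * fixedCount (BK μ 2) ∧
    Nat.card (SYT μ) < 8 * fixedCount (BK μ 2 * BK μ 4) := by
  subst hμ
  refine ⟨card_lt_fixedCount hn (fun u v h => adj_append u (by omega)) good_three
      fun w h => BK_toTab (by omega) (by omega) w h,
    card_lt_fixedCount hn (fun u v h => adj_append u (by omega)) good_two
      fun w h => BK_toTab (by omega) (by omega) w h,
    card_lt_fixedCount hn (fun u v h => ?_) good_two_four fun w h => ?_⟩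
  · rw [adj_append u (by omega), adj_append u (by omega)]
  · rw [Bool.and_eq_true] at h
    rw [Equiv.Perm.mul_apply, BK_toTab (by omega) (by omega) w h.2,
      BK_toTab (by omega) (by omega) w h.1]
end
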